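/- There is no function u : ℝ² → ℝ of type (★) satisfying det D²u = e^{−u} on ℝ² whose associated polytope (the closure of Du(ℝ²)) is the hexagon with vertices (−1,−1), (−1,0), (0,−1), (0,1), (1,0), (1,1). Equivalently, for all nonnegative reals a, b, c, d, the function u(x₁,x₂) = log(1 + e^{x₁} + e^{x₂} + a·e^{x₁+x₂} + b·e^{2x₁+x₂} + c·e^{x₁+2x₂} + d·e^{2x₁+2x₂}) − x₁ − x₂ with a, b, c, d chosen so that the closure of Du(ℝ²) is this hexagon does not satisfy det D²u = e^{−u} on ℝ². -/

import Mathlib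

/-!
The gradient of `u` stays in the hexagon. If `p ∂₀u + q ∂₁u ≤ r` everywhere, then `u` grows at most
linearly with slope `r` along the ray `t ↦ t (p, q)`, while `u` dominates each term
`log a_I + t (I - (1,1)) · (p, q)`; hence every exponent shifted by `(1,1)` satisfies the
inequalities that cut out the hexagon (`exponent_le_of_grad_le`), and only seven monomials survive:
`f = 1 + X + Y + a XY + b X²Y + c XY² + d X²Y²`, where `X = e^{x₀}`, `Y = e^{x₁}`.

The equation `det D²u = e^{-u}`, multiplied by `f³`, becomes the polynomial identity
`f (f₀₀ f₁₁ - f₀₁²) - f₀₀ f₁² - f₁₁ f₀² + 2 f₀₁ f₀ f₁ = X Y f²` on `X, Y > 0`, the subscripts being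
the Euler operators `X ∂_X`, `Y ∂_Y`. Comparing the coefficients of `XY²`, `X³Y`, `XY³` and `X²Y²`
gives `a = 2`, `b = 1`, `c = 1` and `4b + 4c + a = 2a + 2`, a contradiction.
-/

open Real Filter MeasureTheory

/-- The partial derivative of `u : ℝⁿ → ℝ` in the `i`-th coordinate direction. -/
noncomputable def pderivAt {n : ℕ} (u : (Fin n → ℝ) → ℝ) (i : Fin n) (x : Fin n → ℝ) : ℝ :=
  fderiv ℝ u x (Pi.single i 1)

/-- The gradient map `Du : ℝⁿ → ℝⁿ` of `u`. -/
noncomputable def gradMap {n : ℕ} (u : (Fin n → ℝ) → ℝ) (x : Fin n → ℝ) : Fin n → ℝ :=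
  fun i => pderivAt u i x

/-- The Hessian matrix `D²u` of `u` at `x`. -/
noncomputable def hessMat {n : ℕ} (u : (Fin n → ℝ) → ℝ) (x : Fin n → ℝ) :
    Matrix (Fin n) (Fin n) ℝ :=
  Matrix.of fun i j => pderivAt (pderivAt u j) i x

/-- `u` is of type (★) with index set `𝓘` and coefficients `a`:
`u x = log (∑_{I ∈ 𝓘} a_I e^{I·x}) − ∑ i, x i`, where `𝓘 ⊂ ℕⁿ` is finite, contains every
multi-index of length `≤ 1`, `a_I > 0` on `𝓘`, and `a_I = 1` whenever `|I| ≤ 1`. -/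
def IsTypeStar {n : ℕ} (u : (Fin n → ℝ) → ℝ) (𝓘 : Finset (Fin n → ℕ))
    (a : (Fin n → ℕ) → ℝ) : Prop :=
  (∀ I : Fin n → ℕ, (∑ i, I i) ≤ 1 → I ∈ 𝓘) ∧
  (∀ I ∈ 𝓘, 0 < a I) ∧
  (∀ I : Fin n → ℕ, (∑ i, I i) ≤ 1 → a I = 1) ∧
  ∀ x, u x = Real.log (∑ I ∈ 𝓘, a I * Real.exp (∑ i, (I i : ℝ) * x i)) - ∑ i, x i

/-- `u` satisfies the Monge–Ampère equation `det D²u = e^{−u}` on all of `ℝⁿ`. -/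
def SatisfiesMA {n : ℕ} (u : (Fin n → ℝ) → ℝ) : Prop :=
  ∀ x, (hessMat u x).det = Real.exp (-(u x))

/-- The exponential sum `x ↦ ∑_{I ∈ s} w_I e^{I·x}`. -/
noncomputable def expSum (s : Finset (Fin 2 → ℕ)) (w : (Fin 2 → ℕ) → ℝ) (x : Fin 2 → ℝ) : ℝ :=
  ∑ I ∈ s, w I * Real.exp (∑ i, (I i : ℝ) * x i)

/-- The weights of the `i`-th partial derivative of an exponential sum. -/
noncomputable def shiftW (i : Fin 2) (w : (Fin 2 → ℕ) → ℝ) : (Fin 2 → ℕ) → ℝ :=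
  fun I => (I i : ℝ) * w I

theorem differentiable_expSum (s : Finset (Fin 2 → ℕ)) (w : (Fin 2 → ℕ) → ℝ) :
    Differentiable ℝ (expSum s w) := by
  unfold expSum
  fun_prop

theorem pderivAt_expSum (s : Finset (Fin 2 → ℕ)) (w : (Fin 2 → ℕ) → ℝ) (i : Fin 2)
    (x : Fin 2 → ℝ) : pderivAt (expSum s w) i x = expSum s (shiftW i w) x := by
  have h : HasFDerivAt (expSum s w)
      (∑ I ∈ s, w I • (Real.exp (∑ i, (I i : ℝ) * x i) •
        ∑ i, (I i : ℝ) • (ContinuousLinearMap.proj i : (Fin 2 → ℝ) →L[ℝ] ℝ))) x := by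
    unfold expSum
    refine HasFDerivAt.fun_sum fun I _ => ?_
    refine HasFDerivAt.const_mul (HasFDerivAt.exp ?_) _
    refine HasFDerivAt.fun_sum fun j _ => ?_
    exact (hasFDerivAt_apply j x).const_mul _
  rw [pderivAt, h.fderiv]
  simp only [expSum, shiftW, _root_.sum_apply, _root_.smul_apply,
    ContinuousLinearMap.proj_apply, smul_eq_mul]
  refine Finset.sum_congr rfl fun I _ => ?_
  simp only [Pi.single_apply, mul_ite, mul_one, mul_zero, Finset.sum_ite_eq', Finset.mem_univ,
    if_true]
  ring

theorem expSum_pos {s : Finset (Fin 2 → ℕ)} {w : (Fin 2 → ℕ) → ℝ} (hw : ∀ I ∈ s, 0 < w I)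
    (hs : s.Nonempty) (x : Fin 2 → ℝ) : 0 < expSum s w x :=
  Finset.sum_pos (fun I hI => mul_pos (hw I hI) (Real.exp_pos _)) hs

theorem differentiable_logSum {s : Finset (Fin 2 → ℕ)} {w : (Fin 2 → ℕ) → ℝ}
    (hw : ∀ I ∈ s, 0 < w I) (hs : s.Nonempty) :
    Differentiable ℝ fun x => Real.log (expSum s w x) - ∑ i, x i := fun x =>
  ((differentiable_expSum s w x).log (expSum_pos hw hs x).ne').sub (by fun_prop)

theorem pderivAt_logSum {s : Finset (Fin 2 → ℕ)} {w : (Fin 2 → ℕ) → ℝ}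
    (hw : ∀ I ∈ s, 0 < w I) (hs : s.Nonempty) (i : Fin 2) (x : Fin 2 → ℝ) :
    pderivAt (fun x => Real.log (expSum s w x) - ∑ i, x i) i x =
      expSum s (shiftW i w) x / expSum s w x - 1 := by
  have h1 : HasFDerivAt (fun x : Fin 2 → ℝ => ∑ i, x i)
      (∑ i, (ContinuousLinearMap.proj i : (Fin 2 → ℝ) →L[ℝ] ℝ)) x :=
    HasFDerivAt.fun_sum fun j _ => hasFDerivAt_apply j x
  have h2 := ((differentiable_expSum s w x).hasFDerivAt.log (expSum_pos hw hs x).ne').sub h1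
  have h3 : (fderiv ℝ (expSum s w) x) (Pi.single i 1) = _ := pderivAt_expSum s w i x
  have h4 : pderivAt (fun x => Real.log (expSum s w x) - ∑ i, x i) i x = _ :=
    congrArg (fun L => L (Pi.single i 1)) h2.fderiv
  rw [h4]
  simp only [_root_.sub_apply, _root_.smul_apply, h3,
    _root_.sum_apply, ContinuousLinearMap.proj_apply, smul_eq_mul, Pi.single_apply,
    Finset.sum_ite_eq', Finset.mem_univ, if_true]
  rw [inv_mul_eq_div]

theorem pderivAt_pderivAt_logSum {s : Finset (Fin 2 → ℕ)} {w : (Fin 2 → ℕ) → ℝ}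
    (hw : ∀ I ∈ s, 0 < w I) (hs : s.Nonempty) (i j : Fin 2) (x : Fin 2 → ℝ) :
    pderivAt (pderivAt (fun x => Real.log (expSum s w x) - ∑ i, x i) j) i x =
      (expSum s (shiftW i (shiftW j w)) x * expSum s w x
        - expSum s (shiftW j w) x * expSum s (shiftW i w) x) / expSum s w x ^ 2 := by
  have h0 : pderivAt (fun x => Real.log (expSum s w x) - ∑ i, x i) j =
      fun x => expSum s (shiftW j w) x / expSum s w x - 1 :=
    funext fun x => pderivAt_logSum hw hs j x
  have hF := (expSum_pos hw hs x).ne'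
  have h2 := ((differentiable_expSum s (shiftW j w) x).hasFDerivAt.mul
    ((hasDerivAt_inv hF).comp_hasFDerivAt x (differentiable_expSum s w x).hasFDerivAt)).sub_const 1
  have h3 : (fderiv ℝ (expSum s w) x) (Pi.single i 1) = _ := pderivAt_expSum s w i x
  have h3' : (fderiv ℝ (expSum s (shiftW j w)) x) (Pi.single i 1) = _ :=
    pderivAt_expSum s (shiftW j w) i x
  have h4 : pderivAt (fun x => expSum s (shiftW j w) x / expSum s w x - 1) i x = _ :=
    congrArg (fun L => L (Pi.single i 1)) h2.fderiv
  rw [h0, h4]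
  simp only [_root_.add_apply, _root_.smul_apply, h3, h3', smul_eq_mul, Function.comp_apply]
  field_simp
  ring

/-- The Monge–Ampère equation for `u = log F - x₀ - x₁`, cleared of denominators: the determinant
of the Hessian is multiplied by `F³`. -/
theorem cleared_equation {s : Finset (Fin 2 → ℕ)} {w : (Fin 2 → ℕ) → ℝ}
    (hw : ∀ I ∈ s, 0 < w I) (hs : s.Nonempty)
    (hMA : SatisfiesMA fun x : Fin 2 → ℝ => Real.log (expSum s w x) - ∑ i, x i)
    (x : Fin 2 → ℝ) :
    expSum s w x * (expSum s (shiftW 0 (shiftW 0 w)) x * expSum s (shiftW 1 (shiftW 1 w)) x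
        - expSum s (shiftW 0 (shiftW 1 w)) x ^ 2)
      - expSum s (shiftW 0 (shiftW 0 w)) x * expSum s (shiftW 1 w) x ^ 2
      - expSum s (shiftW 1 (shiftW 1 w)) x * expSum s (shiftW 0 w) x ^ 2
      + 2 * expSum s (shiftW 0 (shiftW 1 w)) x * expSum s (shiftW 0 w) x * expSum s (shiftW 1 w) x
      = Real.exp (x 0) * Real.exp (x 1) * expSum s w x ^ 2 := by
  have hF := expSum_pos hw hs x
  have h := hMA x
  have hcomm : shiftW 1 (shiftW 0 w) = shiftW 0 (shiftW 1 w) := by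
    funext I; simp only [shiftW]; ring
  simp only [hessMat, Matrix.det_fin_two, Matrix.of_apply, pderivAt_pderivAt_logSum hw hs,
    hcomm] at h
  rw [neg_sub, Real.exp_sub, Real.exp_log hF, Fin.sum_univ_two, Real.exp_add] at h
  generalize expSum s (shiftW 0 (shiftW 0 w)) x = A at *
  generalize expSum s (shiftW 1 (shiftW 1 w)) x = B at *
  generalize expSum s (shiftW 0 (shiftW 1 w)) x = C at *
  generalize expSum s (shiftW 0 w) x = P at *
  generalize expSum s (shiftW 1 w) x = Q at *
  generalize expSum s w x = F at *
  have hF' := hF.ne'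
  field_simp at h
  -- both sides of `h` still carry a superfluous power of `F`
  apply mul_left_cancel₀ hF'
  linear_combination h

/-- A half-plane `p y₀ + q y₁ ≤ r` containing the gradient image contains all exponents, shifted by
`(1,1)`: otherwise the term of such an exponent outgrows `u` along the ray in direction `(p, q)`. -/
theorem exponent_le_of_grad_le {s : Finset (Fin 2 → ℕ)} {w : (Fin 2 → ℕ) → ℝ}
    (hw : ∀ I ∈ s, 0 < w I) (hs : s.Nonempty) {p q r : ℝ}
    (hgrad : ∀ x, p * gradMap (fun x : Fin 2 → ℝ => Real.log (expSum s w x) - ∑ i, x i) x 0 +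
      q * gradMap (fun x : Fin 2 → ℝ => Real.log (expSum s w x) - ∑ i, x i) x 1 ≤ r)
    {I : Fin 2 → ℕ} (hI : I ∈ s) : p * ((I 0 : ℝ) - 1) + q * ((I 1 : ℝ) - 1) ≤ r := by
  set u : (Fin 2 → ℝ) → ℝ := fun x => Real.log (expSum s w x) - ∑ i, x i with hu
  have hdiff : Differentiable ℝ u := differentiable_logSum hw hs
  let v : Fin 2 → ℝ := ![p, q]
  have hv : v = p • (Pi.single 0 1 : Fin 2 → ℝ) + q • (Pi.single 1 1 : Fin 2 → ℝ) := by
    funext i; fin_cases i <;> simp [v]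
  have hderiv : ∀ t : ℝ, HasDerivAt (fun t : ℝ => u (t • v) - r * t)
      (p * gradMap u (t • v) 0 + q * gradMap u (t • v) 1 - r) t := by
    intro t
    have h1 : HasDerivAt (fun t : ℝ => t • v) v t := by
      simpa using (hasDerivAt_id t).smul_const v
    have h2 := (hdiff (t • v)).hasFDerivAt.comp_hasDerivAt t h1
    have h3 : HasDerivAt (fun t : ℝ => r * t) r t := by
      simpa using (hasDerivAt_id t).const_mul r
    have h4 : fderiv ℝ u (t • v) v = p * gradMap u (t • v) 0 + q * gradMap u (t • v) 1 := by
      generalize t • v = y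
      rw [hv, map_add, map_smul, map_smul]
      rfl
    rw [← h4]
    exact h2.sub h3
  have hanti : Antitone fun t : ℝ => u (t • v) - r * t :=
    antitone_of_hasDerivAt_nonpos hderiv fun t => by
      have := hgrad (t • v)
      simp only [Pi.zero_apply]
      linarith
  by_contra! hcon
  set δ := p * ((I 0 : ℝ) - 1) + q * ((I 1 : ℝ) - 1) - r with hδ
  have hδpos : 0 < δ := by linarith
  have hlow : ∀ t : ℝ, Real.log (w I) + t * (δ + r) ≤ u (t • v) := by
    intro t
    have h1 : w I * Real.exp (∑ i, (I i : ℝ) * (t • v) i) ≤ expSum s w (t • v) :=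
      Finset.single_le_sum (f := fun I : Fin 2 → ℕ => w I * Real.exp (∑ i, (I i : ℝ) * (t • v) i))
        (fun J hJ => (mul_pos (hw J hJ) (Real.exp_pos _)).le) hI
    have h2 := Real.log_le_log (mul_pos (hw I hI) (Real.exp_pos _)) h1
    rw [Real.log_mul (hw I hI).ne' (Real.exp_pos _).ne', Real.log_exp] at h2
    simp only [hu]
    simp only [Fin.sum_univ_two, Pi.smul_apply, smul_eq_mul, v, Matrix.cons_val_zero,
      Matrix.cons_val_one] at h2 ⊢
    simp only [hδ]
    linarith
  -- the lower bound `log w_I + δ t` for `u (t v) - r t` contradicts its antitonicity for large `t`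
  obtain ⟨T, hT⟩ := exists_nat_gt ((u 0 - Real.log (w I)) / δ)
  rw [div_lt_iff₀ hδpos] at hT
  have h1 := hanti (Nat.cast_nonneg (α := ℝ) T)
  have h2 := hlow T
  simp only [zero_smul] at h1
  linarith

theorem coeff_eq_zero {n : ℕ} (c : Fin n → ℝ)
    (h : ∀ t : ℝ, 0 < t → ∑ i, c i * t ^ (i : ℕ) = 0) (i : Fin n) : c i = 0 := by
  classical
  let P : Polynomial ℝ := ∑ i : Fin n, Polynomial.monomial (i : ℕ) (c i)
  have hP : P = 0 := by
    refine Polynomial.eq_zero_of_infinite_isRoot P ((Set.Ioi_infinite (0 : ℝ)).mono ?_)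
    intro t ht
    simpa [P, Polynomial.IsRoot, Polynomial.eval_finsetSum] using h t ht
  have h1 := congrArg (fun Q => Polynomial.coeff Q (i : ℕ)) hP
  simpa [P, Polynomial.finsetSum_coeff, Polynomial.coeff_monomial, Fin.val_inj] using h1

/-- The lattice points of the hexagon, translated by `(1,1)`. -/
def hexPts : Finset (Fin 2 → ℕ) :=
  {![0, 0], ![1, 0], ![0, 1], ![1, 1], ![2, 1], ![1, 2], ![2, 2]}

theorem mem_hexPts {I : Fin 2 → ℕ} (h0 : I 0 ≤ 2) (h1 : I 1 ≤ 2) (h2 : I 0 ≤ I 1 + 1)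
    (h3 : I 1 ≤ I 0 + 1) : I ∈ hexPts := by
  have hI : I = ![I 0, I 1] := by
    funext i; fin_cases i <;> rfl
  rw [hI]
  generalize I 0 = m at *
  generalize I 1 = n at *
  interval_cases m <;> interval_cases n <;> first | omega | decide

/-- An exponential sum with exponents in the hexagon, in the variables `X = e^{x₀}`, `Y = e^{x₁}`;
exponents outside `s` have coefficient `0`. -/
theorem expSum_hex {s : Finset (Fin 2 → ℕ)} (hs : s ⊆ hexPts) (w : (Fin 2 → ℕ) → ℝ)
    {X Y : ℝ} (hX : 0 < X) (hY : 0 < Y) :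
    expSum s w ![Real.log X, Real.log Y] =
      (if ![0, 0] ∈ s then w ![0, 0] else 0) + (if ![1, 0] ∈ s then w ![1, 0] else 0) * X
      + (if ![0, 1] ∈ s then w ![0, 1] else 0) * Y + (if ![1, 1] ∈ s then w ![1, 1] else 0) * (X * Y)
      + (if ![2, 1] ∈ s then w ![2, 1] else 0) * (X ^ 2 * Y)
      + (if ![1, 2] ∈ s then w ![1, 2] else 0) * (X * Y ^ 2)
      + (if ![2, 2] ∈ s then w ![2, 2] else 0) * (X ^ 2 * Y ^ 2) := by
  have hterm : ∀ I : Fin 2 → ℕ, Real.exp (∑ i, (I i : ℝ) * ![Real.log X, Real.log Y] i) =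
      X ^ I 0 * Y ^ I 1 := by
    intro I
    simp [Fin.sum_univ_two, Real.exp_add, Real.exp_nat_mul, Real.exp_log hX, Real.exp_log hY]
  have h1 : expSum s w ![Real.log X, Real.log Y] =
      ∑ I ∈ hexPts, (if I ∈ s then w I else 0) * (X ^ I 0 * Y ^ I 1) := by
    simp only [expSum, hterm, ite_mul, zero_mul, Finset.sum_ite_mem,
      Finset.inter_eq_right.mpr hs]
  rw [h1, hexPts]
  repeat rw [Finset.sum_insert (by decide)]
  rw [Finset.sum_singleton]
  simp
  ring

/-- The contradiction between coefficients: the identity forces `a = 2` and `b = c = 1`, and then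
fails at `X²Y²`. -/
theorem no_coefficients (a b c d : ℝ)
    (h : ∀ X Y : ℝ, 0 < X → 0 < Y →
      (1 + X + Y + a * (X * Y) + b * (X ^ 2 * Y) + c * (X * Y ^ 2) + d * (X ^ 2 * Y ^ 2)) *
          ((X + a * (X * Y) + 4 * b * (X ^ 2 * Y) + c * (X * Y ^ 2) + 4 * d * (X ^ 2 * Y ^ 2)) *
            (Y + a * (X * Y) + b * (X ^ 2 * Y) + 4 * c * (X * Y ^ 2) + 4 * d * (X ^ 2 * Y ^ 2))
          - (a * (X * Y) + 2 * b * (X ^ 2 * Y) + 2 * c * (X * Y ^ 2)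
            + 4 * d * (X ^ 2 * Y ^ 2)) ^ 2)
        - (X + a * (X * Y) + 4 * b * (X ^ 2 * Y) + c * (X * Y ^ 2) + 4 * d * (X ^ 2 * Y ^ 2)) *
          (Y + a * (X * Y) + b * (X ^ 2 * Y) + 2 * c * (X * Y ^ 2) + 2 * d * (X ^ 2 * Y ^ 2)) ^ 2
        - (Y + a * (X * Y) + b * (X ^ 2 * Y) + 4 * c * (X * Y ^ 2) + 4 * d * (X ^ 2 * Y ^ 2)) *
          (X + a * (X * Y) + 2 * b * (X ^ 2 * Y) + c * (X * Y ^ 2) + 2 * d * (X ^ 2 * Y ^ 2)) ^ 2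
        + 2 * (a * (X * Y) + 2 * b * (X ^ 2 * Y) + 2 * c * (X * Y ^ 2)
            + 4 * d * (X ^ 2 * Y ^ 2)) *
          (X + a * (X * Y) + 2 * b * (X ^ 2 * Y) + c * (X * Y ^ 2) + 2 * d * (X ^ 2 * Y ^ 2)) *
          (Y + a * (X * Y) + b * (X ^ 2 * Y) + 2 * c * (X * Y ^ 2) + 2 * d * (X ^ 2 * Y ^ 2))
        = X * Y *
          (1 + X + Y + a * (X * Y) + b * (X ^ 2 * Y) + c * (X * Y ^ 2)
            + d * (X ^ 2 * Y ^ 2)) ^ 2) : False := by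
  -- entry `(i, j)` is the coefficient of `X^i Y^j` in the difference of the sides divided by `X Y`
  let M : Fin 5 → Fin 5 → ℝ := ![
    ![0, a - 2, c - 1, 0, 0],
    ![a - 2, 4 * c + 4 * b - a - 2, 4 * d + a * c + 2 * c - 2 * a, a * c - 2 * c, 0],
    ![b - 1, 4 * d + a * b + 2 * b - 2 * a,
      9 * b * c + 7 * d - 2 * c - 2 * b - a * a,
      4 * c * d + a * d + 4 * b * c - 2 * d - 2 * a * c, c * d - c * c],
    ![0, a * b - 2 * b, 4 * b * d + a * d + 4 * b * c - 2 * d - 2 * a * b,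
      4 * c * d + 4 * b * d + a * b * c - 2 * a * d - 2 * b * c, a * c * d - 2 * c * d],
    ![0, 0, b * d - b * b, a * b * d - 2 * b * d, b * c * d - d * d]]
  have hM : ∀ i j, M i j = 0 := by
    intro i
    refine coeff_eq_zero (M i) fun Y hY => ?_
    refine coeff_eq_zero (fun i => ∑ j, M i j * Y ^ (j : ℕ)) (fun X hX => ?_) i
    have hXY : X * Y ≠ 0 := (mul_pos hX hY).ne'
    refine (mul_eq_zero.mp ?_).resolve_left hXY
    simp only [Fin.sum_univ_five]
    simp [M, -mul_eq_zero]
    linear_combination h X Y hX hY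
  have ha : a - 2 = 0 := hM 0 1
  have hc : c - 1 = 0 := hM 0 2
  have hb : b - 1 = 0 := hM 2 0
  have hlast : 4 * c + 4 * b - a - 2 = 0 := hM 1 1
  linarith

/-- Each closed half-plane containing the six vertices contains the whole gradient image. -/
theorem grad_le_of_vertices {u : (Fin 2 → ℝ) → ℝ}
    (hP : closure (Set.range (gradMap u)) =
        convexHull ℝ
          ({![-1, -1], ![-1, 0], ![0, -1], ![0, 1], ![1, 0], ![1, 1]} :
            Set (Fin 2 → ℝ))) {p q r : ℝ}
    (h1 : -p - q ≤ r) (h2 : -p ≤ r) (h3 : -q ≤ r) (h4 : q ≤ r) (h5 : p ≤ r) (h6 : p + q ≤ r)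
    (x : Fin 2 → ℝ) : p * gradMap u x 0 + q * gradMap u x 1 ≤ r := by
  have hconv : Convex ℝ {y : Fin 2 → ℝ | p * y 0 + q * y 1 ≤ r} := by
    refine convex_halfSpace_le (f := fun y : Fin 2 → ℝ => p * y 0 + q * y 1) ⟨?_, ?_⟩ r
    · intro y z; simp only [Pi.add_apply]; ring
    · intro k y; simp only [Pi.smul_apply, smul_eq_mul]; ring
  have hsub := convexHull_min (𝕜 := ℝ)
    (s := {![-1, -1], ![-1, 0], ![0, -1], ![0, 1], ![1, 0], ![1, 1]}) (fun y hy => by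
      simp only [Set.mem_insert_iff, Set.mem_singleton_iff] at hy
      rcases hy with rfl | rfl | rfl | rfl | rfl | rfl <;> simp <;> linarith) hconv
  have hx : gradMap u x ∈ closure (Set.range (gradMap u)) := subset_closure ⟨x, rfl⟩
  rw [hP] at hx
  exact hsub hx

/-- no function of type (★) satisfying `det D²u = e^{−u}` on `ℝ²` has as
associated polytope the hexagon with vertices
`(−1,−1), (−1,0), (0,−1), (0,1), (1,0), (1,1)`. -/
theorem stmt14 :
    ¬ ∃ (u : (Fin 2 → ℝ) → ℝ) (𝓘 : Finset (Fin 2 → ℕ)) (a : (Fin 2 → ℕ) → ℝ),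
      IsTypeStar u 𝓘 a ∧ SatisfiesMA u ∧
      closure (Set.range (gradMap u)) =
        convexHull ℝ
          ({![-1, -1], ![-1, 0], ![0, -1], ![0, 1], ![1, 0], ![1, 1]} :
            Set (Fin 2 → ℝ)) := by
  rintro ⟨u, s, w, ⟨hlow, hw, hone, hu⟩, hMA, hP⟩
  obtain rfl : u = fun x => Real.log (expSum s w x) - ∑ i, x i := funext hu
  have hs : s.Nonempty := ⟨_, hlow 0 (by simp)⟩
  have hhex : s ⊆ hexPts := by
    intro I hI
    have e1 := exponent_le_of_grad_le hw hs (p := 1) (q := 0) (r := 1)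
      (grad_le_of_vertices hP (by norm_num) (by norm_num) (by norm_num) (by norm_num)
        (by norm_num) (by norm_num)) hI
    have e2 := exponent_le_of_grad_le hw hs (p := 0) (q := 1) (r := 1)
      (grad_le_of_vertices hP (by norm_num) (by norm_num) (by norm_num) (by norm_num)
        (by norm_num) (by norm_num)) hI
    have e3 := exponent_le_of_grad_le hw hs (p := 1) (q := -1) (r := 1)
      (grad_le_of_vertices hP (by norm_num) (by norm_num) (by norm_num) (by norm_num)
        (by norm_num) (by norm_num)) hI
    have e4 := exponent_le_of_grad_le hw hs (p := -1) (q := 1) (r := 1)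
      (grad_le_of_vertices hP (by norm_num) (by norm_num) (by norm_num) (by norm_num)
        (by norm_num) (by norm_num)) hI
    refine mem_hexPts ?_ ?_ ?_ ?_ <;>
    · rify
      linarith
  have m0 : ![0, 0] ∈ s := hlow _ (by simp)
  have m1 : ![1, 0] ∈ s := hlow _ (by simp)
  have m2 : ![0, 1] ∈ s := hlow _ (by simp)
  have w0 : w ![0, 0] = 1 := hone _ (by simp)
  have w1 : w ![1, 0] = 1 := hone _ (by simp)
  have w2 : w ![0, 1] = 1 := hone _ (by simp)
  refine no_coefficients (if ![1, 1] ∈ s then w ![1, 1] else 0)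
    (if ![2, 1] ∈ s then w ![2, 1] else 0) (if ![1, 2] ∈ s then w ![1, 2] else 0)
    (if ![2, 2] ∈ s then w ![2, 2] else 0) fun X Y hX hY => ?_
  have h := cleared_equation hw hs hMA ![Real.log X, Real.log Y]
  have hmul : ∀ (P : Prop) [Decidable P] (k z : ℝ),
      (if P then k * z else 0) = k * (if P then z else 0) := fun P _ k z => by simp
  simp only [expSum_hex hhex _ hX hY, shiftW, if_pos m0, if_pos m1, if_pos m2, w0, w1, w2, hmul,
    Matrix.cons_val_zero, Matrix.cons_val_one, Real.exp_log hX, Real.exp_log hY] at h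
  push_cast at h
  linear_combination h
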